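/- arXiv:1509.00106 — 2 statements merged into one kernel-verified Lean document; each statement's English description precedes it below -/
import Mathlib

section
/- Let τ_k ∈ (0,1], γ_k > 0, γ_{k+1} > 0, x^k ∈ dom g and x̃^k ∈ ℝ^p. Define x̂^k := (1 − τ_k)·x^k + τ_k·x̃^k, x^{k+1} := prox_{βg}( x̂^k − β·A u*_{γ_{k+1}}(Aᵀx̂^k) ) with β := γ_{k+1}/‖A‖², and x̃^{k+1} := x̃^k − (1/τ_k)·(x̂^k − x^{k+1}). Then for every x ∈ ℝ^p (in the extended reals): F_{γ_{k+1}}(x^{k+1}) ≤ (1 − τ_k)·F_{γ_k}(x^k) + τ_k·F(x) + (‖A‖²·τ_k²/(2γ_{k+1}))·[ ‖x̃^k − x‖² − ‖x̃^{k+1} − x‖² ] − R_k. -/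
open scoped RealInnerProductSpace BigOperators

theorem aux_limit (a c m : ℝ) (hc : 0 ≤ c)
    (h : ∀ t : ℝ, 0 < t → t < 1 → a + (1 - t) * c ≤ m) : a + c ≤ m := by
  by_contra hcon
  push Not at hcon
  have hd : 0 < a + c - m := by linarith
  have hs : 0 < 2 * (c + (a + c - m)) := by linarith
  have h1 := h ((a + c - m) / (2 * (c + (a + c - m)))) (by positivity)
    (by rw [div_lt_one hs]; linarith)
  have h2 : (a + c - m) / (2 * (c + (a + c - m))) * c ≤ (a + c - m) / 2 := by
    rw [div_mul_eq_mul_div, div_le_div_iff₀ hs (by norm_num)]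
    nlinarith
  linarith

theorem aux_norm {E : Type*} [NormedAddCommGroup E] [InnerProductSpace ℝ E] (x y w : E) (t : ℝ) :
    ‖(1 - t) • x + t • y - w‖ ^ 2
      = (1 - t) * ‖x - w‖ ^ 2 + t * ‖y - w‖ ^ 2 - t * (1 - t) * ‖y - x‖ ^ 2 := by
  have e1 : (1 - t) • x + t • y - w = (x - w) + t • (y - x) := by module
  have e2 : y - w = (x - w) + (y - x) := by abel
  rw [e1, e2, norm_add_sq_real, norm_add_sq_real, norm_smul, inner_smul_right, mul_pow,
    Real.norm_eq_abs, sq_abs]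
  ring

theorem aux_convex {E : Type*} [AddCommGroup E] [Module ℝ E] (φ : E → EReal)
    (hbot : ∀ v, φ v ≠ ⊥)
    (hcx : ∀ v w : E, ∀ a c : ℝ, 0 ≤ a → 0 ≤ c → a + c = 1 →
      φ (a • v + c • w) ≤ (a : EReal) * φ v + (c : EReal) * φ w)
    (v w : E) (hv : φ v ≠ ⊤) (hw : φ w ≠ ⊤) (a c : ℝ) (ha : 0 ≤ a) (hc : 0 ≤ c)
    (hac : a + c = 1) :
    φ (a • v + c • w) ≠ ⊤ ∧
      (φ (a • v + c • w)).toReal ≤ a * (φ v).toReal + c * (φ w).toReal := by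
  have h := hcx v w a c ha hc hac
  have hb := hbot (a • v + c • w)
  generalize φ (a • v + c • w) = q at *
  have hvb := hbot v
  have hwb := hbot w
  lift φ v to ℝ using ⟨hv, hvb⟩ with r
  lift φ w to ℝ using ⟨hw, hwb⟩ with s
  have hq : q ≠ ⊤ := by
    rintro rfl
    rw [← EReal.coe_mul, ← EReal.coe_mul, ← EReal.coe_add] at h
    exact absurd (top_le_iff.1 h) (EReal.coe_ne_top _)
  lift q to ℝ using ⟨hq, hb⟩ with q'
  refine ⟨hq, ?_⟩
  simp only [EReal.toReal_coe]
  exact_mod_cast h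

theorem aux_prox {E : Type*} [NormedAddCommGroup E] [InnerProductSpace ℝ E] (g : E → EReal)
    (hbot : ∀ v, g v ≠ ⊥)
    (hcx : ∀ v w : E, ∀ a c : ℝ, 0 ≤ a → 0 ≤ c → a + c = 1 →
      g (a • v + c • w) ≤ (a : EReal) * g v + (c : EReal) * g w)
    (K : ℝ) (hK : 0 ≤ K) (w q : E)
    (hq : ∀ y, g q + ((K * ‖q - w‖ ^ 2 : ℝ) : EReal) ≤ g y + ((K * ‖y - w‖ ^ 2 : ℝ) : EReal))
    (y0 : E) (hy0 : g y0 ≠ ⊤) :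
    g q ≠ ⊤ ∧ ∀ y, g y ≠ ⊤ →
      (g q).toReal + K * ‖q - w‖ ^ 2 + K * ‖y - q‖ ^ 2 ≤ (g y).toReal + K * ‖y - w‖ ^ 2 := by
  have hqt : g q ≠ ⊤ := by
    intro h
    have h1 := hq y0
    have hb := hbot y0
    lift g y0 to ℝ using ⟨hy0, hb⟩ with r
    rw [h, EReal.top_add_coe, ← EReal.coe_add] at h1
    exact absurd (top_le_iff.1 h1) (EReal.coe_ne_top _)
  have hreal : ∀ y, g y ≠ ⊤ → (g q).toReal + K * ‖q - w‖ ^ 2 ≤ (g y).toReal + K * ‖y - w‖ ^ 2 := by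
    intro y hy
    have h1 := hq y
    have hb := hbot y
    have hb' := hbot q
    lift g y to ℝ using ⟨hy, hb⟩ with r
    lift g q to ℝ using ⟨hqt, hb'⟩ with s
    simp only [EReal.toReal_coe]
    exact_mod_cast h1
  refine ⟨hqt, fun y hy => ?_⟩
  apply aux_limit _ _ _ (by positivity)
  intro t ht0 ht1
  obtain ⟨h1, h2⟩ := aux_convex g hbot hcx q y hqt hy (1 - t) t (by linarith) ht0.le (by ring)
  have h3 := hreal _ h1
  rw [aux_norm] at h3
  have h4 : t * ((g q).toReal + K * ‖q - w‖ ^ 2 + (1 - t) * (K * ‖y - q‖ ^ 2))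
      ≤ t * ((g y).toReal + K * ‖y - w‖ ^ 2) := by linarith
  exact le_of_mul_le_mul_left h4 ht0

theorem aux_max {E : Type*} [NormedAddCommGroup E] [InnerProductSpace ℝ E]
    (U : Set E) (hU : Convex ℝ U) (φ : E → EReal)
    (hbot : ∀ v, φ v ≠ ⊥)
    (hcx : ∀ v w : E, ∀ a c : ℝ, 0 ≤ a → 0 ≤ c → a + c = 1 →
      φ (a • v + c • w) ≤ (a : EReal) * φ v + (c : EReal) * φ w)
    (b : E → ℝ) (hb : StrongConvexOn U 1 b) (γ : ℝ) (hγ : 0 < γ) (z u : E) (hu : u ∈ U)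
    (hut : φ u ≠ ⊤)
    (hmax : ∀ v ∈ U, (⟪z, v⟫ : EReal) - φ v - ((γ * b v : ℝ) : EReal)
        ≤ (⟪z, u⟫ : EReal) - φ u - ((γ * b u : ℝ) : EReal))
    (v : E) (hv : v ∈ U) (hvt : φ v ≠ ⊤) :
    ⟪z, v⟫ - (φ v).toReal - γ * b v + γ / 2 * ‖v - u‖ ^ 2
      ≤ ⟪z, u⟫ - (φ u).toReal - γ * b u := by
  have hreal : ∀ v ∈ U, φ v ≠ ⊤ →
      ⟪z, v⟫ - (φ v).toReal - γ * b v ≤ ⟪z, u⟫ - (φ u).toReal - γ * b u := by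
    intro v hv hvt
    have h1 := hmax v hv
    have hvb := hbot v
    have hub := hbot u
    lift φ v to ℝ using ⟨hvt, hvb⟩ with r
    lift φ u to ℝ using ⟨hut, hub⟩ with s
    simp only [EReal.toReal_coe]
    exact_mod_cast h1
  apply aux_limit _ _ _ (by positivity)
  intro t ht0 ht1
  obtain ⟨h1, h2⟩ := aux_convex φ hbot hcx u v hut hvt (1 - t) t (by linarith) ht0.le (by ring)
  have hmem : (1 - t) • u + t • v ∈ U := hU hu hv (by linarith) ht0.le (by ring)
  have h3 := hreal _ hmem h1
  have h5 := hb.2 hu hv (by linarith : 0 ≤ 1 - t) ht0.le (by ring)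
  simp only [smul_eq_mul] at h5
  rw [norm_sub_rev u v] at h5
  have h6 := mul_le_mul_of_nonneg_left h5 hγ.le
  rw [inner_add_right, inner_smul_right, inner_smul_right] at h3
  have h4 : t * (⟪z, v⟫ - (φ v).toReal - γ * b v + (1 - t) * (γ / 2 * ‖v - u‖ ^ 2))
      ≤ t * (⟪z, u⟫ - (φ u).toReal - γ * b u) := by linarith
  exact le_of_mul_le_mul_left h4 ht0

theorem stmt_10
    {n : ℕ} (hn : 1 ≤ n)
    (U : Set (EuclideanSpace ℝ (Fin n)))
    (hUne : U.Nonempty) (hUcl : IsClosed U) (hUcx : Convex ℝ U)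
    (φ : EuclideanSpace ℝ (Fin n) → EReal)
    (hφbot : ∀ v, φ v ≠ ⊥)
    (hφlsc : LowerSemicontinuous φ)
    (hφcx : ∀ v w : EuclideanSpace ℝ (Fin n), ∀ a c : ℝ, 0 ≤ a → 0 ≤ c → a + c = 1 →
      φ (a • v + c • w) ≤ (a : EReal) * φ v + (c : EReal) * φ w)
    (hφdom : ∃ v ∈ U, φ v ≠ ⊤)
    (b : EuclideanSpace ℝ (Fin n) → ℝ)
    (hbcont : Continuous b)
    (hbsc : StrongConvexOn U 1 b)
    (ustar : ℝ → EuclideanSpace ℝ (Fin n) → EuclideanSpace ℝ (Fin n))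
    (humem : ∀ γ > (0:ℝ), ∀ z, ustar γ z ∈ U)
    (hufin : ∀ γ > (0:ℝ), ∀ z, φ (ustar γ z) ≠ ⊤)
    (humax : ∀ γ > (0:ℝ), ∀ z, ∀ v ∈ U,
      (⟪z, v⟫ : EReal) - φ v - ((γ * b v : ℝ) : EReal)
        ≤ (⟪z, ustar γ z⟫ : EReal) - φ (ustar γ z) - ((γ * b (ustar γ z) : ℝ) : EReal))
    (φs : ℝ → EuclideanSpace ℝ (Fin n) → ℝ)
    (hφs : ∀ γ z, φs γ z = ⟪z, ustar γ z⟫ - (φ (ustar γ z)).toReal - γ * b (ustar γ z))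
    {p : ℕ} (hp : 1 ≤ p)
    (A : EuclideanSpace ℝ (Fin n) →L[ℝ] EuclideanSpace ℝ (Fin p))
    (hAnorm : 0 < ‖A‖)
    (f : EuclideanSpace ℝ (Fin p) → EReal)
    (hf : ∀ x, f x = ⨆ v ∈ U, ((⟪x, A v⟫ : EReal) - φ v))
    (g : EuclideanSpace ℝ (Fin p) → EReal)
    (hgbot : ∀ y, g y ≠ ⊥)
    (hgdom : ∃ y, g y ≠ ⊤)
    (hglsc : LowerSemicontinuous g)
    (hgcx : ∀ y w : EuclideanSpace ℝ (Fin p), ∀ a c : ℝ, 0 ≤ a → 0 ≤ c → a + c = 1 →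
      g (a • y + c • w) ≤ (a : EReal) * g y + (c : EReal) * g w)
    (prox : ℝ → EuclideanSpace ℝ (Fin p) → EuclideanSpace ℝ (Fin p))
    (hprox : ∀ β > (0:ℝ), ∀ x y,
      g (prox β x) + (((2*β)⁻¹ * ‖prox β x - x‖^2 : ℝ) : EReal)
        ≤ g y + (((2*β)⁻¹ * ‖y - x‖^2 : ℝ) : EReal))
    (hproxu : ∀ β > (0:ℝ), ∀ x y,
      (∀ w, g y + (((2*β)⁻¹ * ‖y - x‖^2 : ℝ) : EReal)
          ≤ g w + (((2*β)⁻¹ * ‖w - x‖^2 : ℝ) : EReal)) → y = prox β x)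
    (τk γk γk1 : ℝ) (hτk : τk ∈ Set.Ioc (0:ℝ) 1) (hγk : 0 < γk) (hγk1 : 0 < γk1)
    (xk xtk : EuclideanSpace ℝ (Fin p)) (hxkdom : g xk ≠ ⊤)
    (xhk xk1 xtk1 : EuclideanSpace ℝ (Fin p))
    (hxhk : xhk = (1 - τk) • xk + τk • xtk)
    (hxk1 : xk1 = prox (γk1/‖A‖^2) (xhk - (γk1/‖A‖^2) • A (ustar γk1 ((ContinuousLinearMap.adjoint A) xhk))))
    (hxtk1 : xtk1 = xtk - τk⁻¹ • (xhk - xk1))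
    (Rk : ℝ)
    (hRk : Rk = τk * γk1 * b (ustar γk1 ((ContinuousLinearMap.adjoint A) xhk))
        - (1 - τk) * (γk - γk1) * b (ustar γk1 ((ContinuousLinearMap.adjoint A) xk))
        + ((1 - τk) * γk1 / 2) * ‖ustar γk1 ((ContinuousLinearMap.adjoint A) xk) - ustar γk1 ((ContinuousLinearMap.adjoint A) xhk)‖^2)
    :
    ∀ x : EuclideanSpace ℝ (Fin p),
      ((φs γk1 ((ContinuousLinearMap.adjoint A) xk1) : ℝ) : EReal) + g xk1
        ≤ ((1 - τk : ℝ) : EReal) * (((φs γk ((ContinuousLinearMap.adjoint A) xk) : ℝ) : EReal) + g xk)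
          + ((τk : ℝ) : EReal) * (f x + g x)
          + ((‖A‖^2 * τk^2 / (2*γk1) * (‖xtk - x‖^2 - ‖xtk1 - x‖^2) - Rk : ℝ) : EReal) := by
  intro x
  obtain ⟨hτ0, hτ1⟩ := hτk
  have S : ∀ γ > (0:ℝ), ∀ z, ∀ v ∈ U, φ v ≠ ⊤ →
      ⟪z, v⟫ - (φ v).toReal - γ * b v + γ / 2 * ‖v - ustar γ z‖ ^ 2 ≤ φs γ z := by
    intro γ hγ z v hv hvt
    rw [hφs]
    exact aux_max U hUcx φ hφbot hφcx b hbsc γ hγ z _ (humem γ hγ z) (hufin γ hγ z)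
      (humax γ hγ z) v hv hvt
  set uh := ustar γk1 ((ContinuousLinearMap.adjoint A) xhk) with huh
  set uk := ustar γk1 ((ContinuousLinearMap.adjoint A) xk) with huk
  set up := ustar γk1 ((ContinuousLinearMap.adjoint A) xk1) with hup
  have huhU : uh ∈ U := humem _ hγk1 _
  have huht : φ uh ≠ ⊤ := hufin _ hγk1 _
  have hukU : uk ∈ U := humem _ hγk1 _
  have hukt : φ uk ≠ ⊤ := hufin _ hγk1 _
  have hupU : up ∈ U := humem _ hγk1 _
  have hupt : φ up ≠ ⊤ := hufin _ hγk1 _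
  -- lower bound for f
  have hfle : ((⟪x, A uh⟫ - (φ uh).toReal : ℝ) : EReal) ≤ f x := by
    rw [hf]
    refine le_trans (le_of_eq ?_) (le_iSup₂ (f := fun v (_ : v ∈ U) => ((⟪x, A v⟫ : EReal) - φ v)) uh huhU)
    rw [EReal.coe_sub, EReal.coe_toReal huht (hφbot _)]
  have hfbot : f x ≠ ⊥ := by
    intro h
    rw [h] at hfle
    exact absurd (le_bot_iff.1 hfle) (EReal.coe_ne_bot _)
  -- prox
  have hβ : 0 < γk1 / ‖A‖ ^ 2 := by positivity
  obtain ⟨hg1, hP⟩ := aux_prox g hgbot hgcx ((2 * (γk1 / ‖A‖ ^ 2))⁻¹) (by positivity)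
    (xhk - (γk1 / ‖A‖ ^ 2) • A uh) xk1 (by rw [hxk1]; exact hprox _ hβ _) xk hxkdom
  by_cases hgx : g x = ⊤
  · rw [hgx, EReal.add_top_of_ne_bot hfbot, EReal.coe_mul_top_of_pos hτ0]
    have hgk := hgbot xk
    lift g xk to ℝ using ⟨hxkdom, hgk⟩ with r
    rw [← EReal.coe_add, ← EReal.coe_mul, EReal.coe_add_top, EReal.top_add_coe]
    exact le_top
  by_cases hfx : f x = ⊤
  · rw [hfx, EReal.top_add_of_ne_bot (hgbot x), EReal.coe_mul_top_of_pos hτ0]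
    have hgk := hgbot xk
    lift g xk to ℝ using ⟨hxkdom, hgk⟩ with r
    rw [← EReal.coe_add, ← EReal.coe_mul, EReal.coe_add_top, EReal.top_add_coe]
    exact le_top
  obtain ⟨hy, hyle⟩ := aux_convex g hgbot hgcx xk x hxkdom hgx (1 - τk) τk (by linarith) hτ0.le
    (by ring)
  have hPy := hP _ hy
  have hfr : ⟪x, A uh⟫ - (φ uh).toReal ≤ (f x).toReal := by
    rw [← EReal.coe_toReal hfx hfbot] at hfle
    exact_mod_cast hfle
  have key : φs γk1 ((ContinuousLinearMap.adjoint A) xk1) + (g xk1).toReal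
      ≤ (1 - τk) * (φs γk ((ContinuousLinearMap.adjoint A) xk) + (g xk).toReal)
        + τk * ((f x).toReal + (g x).toReal)
        + (‖A‖^2 * τk^2 / (2*γk1) * (‖xtk - x‖^2 - ‖xtk1 - x‖^2) - Rk) := by
    have s1 := S γk1 hγk1 ((ContinuousLinearMap.adjoint A) xhk) up hupU hupt
    have s2 := S γk1 hγk1 ((ContinuousLinearMap.adjoint A) xk) uh huhU huht
    have s3 := S γk hγk ((ContinuousLinearMap.adjoint A) xk) uk hukU hukt
    have s3' : 0 ≤ γk / 2 * ‖uk - ustar γk ((ContinuousLinearMap.adjoint A) xk)‖ ^ 2 := by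
      positivity
    have e1 := hφs γk1 ((ContinuousLinearMap.adjoint A) xk1)
    have e2 := hφs γk1 ((ContinuousLinearMap.adjoint A) xhk)
    have e3 := hφs γk1 ((ContinuousLinearMap.adjoint A) xk)
    rw [← hup] at e1
    rw [← huh] at e2 s1
    rw [← huk] at e3 s2
    simp only [ContinuousLinearMap.adjoint_inner_left] at s1 s2 s3 e1 e2 e3
    rw [norm_sub_rev uh uk] at s2
    -- smoothness
    have c1 : ⟪xk1 - xhk, A (up - uh)⟫ ≤ ‖xk1 - xhk‖ * (‖A‖ * ‖up - uh‖) :=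
      (real_inner_le_norm _ _).trans
        (mul_le_mul_of_nonneg_left (A.le_opNorm _) (norm_nonneg _))
    have c2 : ‖xk1 - xhk‖ * (‖A‖ * ‖up - uh‖)
        ≤ ‖A‖ ^ 2 / (2 * γk1) * ‖xk1 - xhk‖ ^ 2 + γk1 / 2 * ‖up - uh‖ ^ 2 := by
      have : ‖A‖ ^ 2 / (2 * γk1) * ‖xk1 - xhk‖ ^ 2 + γk1 / 2 * ‖up - uh‖ ^ 2
          - ‖xk1 - xhk‖ * (‖A‖ * ‖up - uh‖)
          = (‖A‖ * ‖xk1 - xhk‖ - γk1 * ‖up - uh‖) ^ 2 / (2 * γk1) := by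
        field_simp
        ring
      have h0 : 0 ≤ (‖A‖ * ‖xk1 - xhk‖ - γk1 * ‖up - uh‖) ^ 2 / (2 * γk1) := by positivity
      linarith
    rw [map_sub, inner_sub_left, inner_sub_right, inner_sub_right] at c1
    -- prox expansion
    have hexp : ∀ v : EuclideanSpace ℝ (Fin p), (2 * (γk1 / ‖A‖ ^ 2))⁻¹ *
        ‖v - (xhk - (γk1 / ‖A‖ ^ 2) • A uh)‖ ^ 2
        = ‖A‖ ^ 2 / (2 * γk1) * ‖v - xhk‖ ^ 2 + (⟪v, A uh⟫ - ⟪xhk, A uh⟫)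
          + (2 * (γk1 / ‖A‖ ^ 2))⁻¹ * ((γk1 / ‖A‖ ^ 2) ^ 2 * ‖A uh‖ ^ 2) := by
      intro v
      have : v - (xhk - (γk1 / ‖A‖ ^ 2) • A uh) = (v - xhk) + (γk1 / ‖A‖ ^ 2) • A uh := by abel
      rw [this, norm_add_sq_real, norm_smul, inner_smul_right, mul_pow, Real.norm_eq_abs, sq_abs,
        inner_sub_left]
      field_simp
    rw [hexp, hexp] at hPy
    have n1 : (1 - τk) • xk + τk • x - xhk = (-τk) • (xtk - x) := by rw [hxhk]; module
    have n2 : (1 - τk) • xk + τk • x - xk1 = (-τk) • (xtk1 - x) := by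
      have : (-τk) • (xtk1 - x) = (-τk) • (xtk - x) + (τk * τk⁻¹) • (xhk - xk1) := by
        rw [hxtk1]; module
      rw [this, mul_inv_cancel₀ hτ0.ne', ← n1]; module
    have hK : (2 * (γk1 / ‖A‖ ^ 2))⁻¹ = ‖A‖ ^ 2 / (2 * γk1) := by field_simp
    rw [n1, n2, norm_smul, norm_smul, mul_pow, mul_pow, Real.norm_eq_abs, sq_abs, inner_add_left,
      inner_smul_left, inner_smul_left, hK] at hPy
    simp only [conj_trivial] at hPy
    have i1 := mul_le_mul_of_nonneg_left hfr hτ0.le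
    have i2 := mul_le_mul_of_nonneg_left s2 (by linarith : 0 ≤ 1 - τk)
    have i3 : (1 - τk) * (φs γk1 ((ContinuousLinearMap.adjoint A) xk))
        ≤ (1 - τk) * (φs γk ((ContinuousLinearMap.adjoint A) xk) + (γk - γk1) * b uk) :=
      mul_le_mul_of_nonneg_left (by linarith) (by linarith)
    have hL : ‖A‖^2 * τk^2 / (2*γk1) = ‖A‖ ^ 2 / (2 * γk1) * τk ^ 2 := by ring
    rw [hRk, hL]
    generalize ‖A‖ ^ 2 / (2 * γk1) * ((γk1 / ‖A‖ ^ 2) ^ 2 * ‖A uh‖ ^ 2) = C at hPy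
    generalize ‖A‖ ^ 2 / (2 * γk1) = L at *
    have j1 : φs γk1 ((ContinuousLinearMap.adjoint A) xk1)
        ≤ φs γk1 ((ContinuousLinearMap.adjoint A) xhk) + (⟪xk1, A uh⟫ - ⟪xhk, A uh⟫)
          + L * ‖xk1 - xhk‖ ^ 2 := by linarith
    have j2 : φs γk1 ((ContinuousLinearMap.adjoint A) xk1) + (g xk1).toReal
        ≤ (1 - τk) * (g xk).toReal + τk * (g x).toReal
          + (1 - τk) * (⟪xk, A uh⟫ - (φ uh).toReal - γk1 * b uh)
          + τk * (⟪x, A uh⟫ - (φ uh).toReal - γk1 * b uh)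
          + L * τk ^ 2 * (‖xtk - x‖^2 - ‖xtk1 - x‖^2) := by linarith
    linarith
  have hb1 := hgbot xk1
  have hbk := hgbot xk
  have hbx := hgbot x
  rw [← EReal.coe_toReal hg1 hb1, ← EReal.coe_toReal hxkdom hbk, ← EReal.coe_toReal hgx hbx,
    ← EReal.coe_toReal hfx hfbot]
  exact_mod_cast key
end

section
/- For every k ≥ 0, the averaged primal iterate satisfies dist(b − Aū^k, K) ≤ ‖A‖²·( ‖x⁰ − x*‖ + √( ‖x⁰ − x*‖² + 2‖A‖^{−2}·(2γ₁² + γ₁)·D_U ) )/( γ₁·(k + 1) ). -/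
open scoped RealInnerProductSpace BigOperators

namespace Stmt19Aux

variable {E H : Type*} [NormedAddCommGroup E] [InnerProductSpace ℝ E]
  [NormedAddCommGroup H] [InnerProductSpace ℝ H]

/-- strong convexity growth at a minimizer -/
theorem growth (C : Set E) (h : E → ℝ) (hC : ConvexOn ℝ C h) (m : ℝ) (c x0 : E)
    (hx0 : x0 ∈ C)
    (hmin : ∀ y ∈ C, h x0 + m * ‖x0 - c‖^2 ≤ h y + m * ‖y - c‖^2) (y : E) (hy : y ∈ C) :
    h x0 + m * ‖x0 - c‖^2 + m * ‖y - x0‖^2 ≤ h y + m * ‖y - c‖^2 := by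
  have key : ∀ t : ℝ, 0 < t → t < 1 →
      h x0 + m * ‖x0 - c‖^2 + m * (1 - t) * ‖y - x0‖^2 ≤ h y + m * ‖y - c‖^2 := by
    intro t ht ht1
    have h1 := hC.2 hx0 hy (by linarith : (0:ℝ) ≤ 1 - t) ht.le (by ring)
    have hmem := hC.1 hx0 hy (by linarith : (0:ℝ) ≤ 1 - t) ht.le (by ring)
    have h2 := hmin _ hmem
    have e : ‖(1 - t) • x0 + t • y - c‖^2
        = (1 - t) * ‖x0 - c‖^2 + t * ‖y - c‖^2 - t * (1 - t) * ‖y - x0‖^2 := by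
      have e1 : (1 - t) • x0 + t • y - c = (x0 - c) + t • ((y - c) - (x0 - c)) := by module
      have e2 : y - x0 = (y - c) - (x0 - c) := by abel
      rw [e1, e2]
      generalize x0 - c = a
      generalize y - c = b
      simp only [← real_inner_self_eq_norm_sq, inner_add_left, inner_add_right, inner_sub_left,
        inner_sub_right, real_inner_smul_left, real_inner_smul_right, real_inner_comm b a]
      ring
    rw [e] at h2
    simp only [smul_eq_mul] at h1
    have h3 : 0 ≤ t * ((h y + m * ‖y - c‖^2)
        - (h x0 + m * ‖x0 - c‖^2 + m * (1 - t) * ‖y - x0‖^2)) := by nlinarith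
    have := nonneg_of_mul_nonneg_right h3 ht
    linarith
  have hlim : Filter.Tendsto
      (fun t : ℝ => h x0 + m * ‖x0 - c‖^2 + m * (1 - t) * ‖y - x0‖^2)
      (nhdsWithin 0 (Set.Ioi 0))
      (nhds (h x0 + m * ‖x0 - c‖^2 + m * (1 - 0) * ‖y - x0‖^2)) := by
    apply Filter.Tendsto.mono_left _ nhdsWithin_le_nhds
    apply Continuous.tendsto
    fun_prop
  have := le_of_tendsto hlim (by
    filter_upwards [Ioo_mem_nhdsGT (show (0:ℝ) < 1 by norm_num)] with t ht
    exact key t ht.1 ht.2)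
  simpa using this

/-- value of the smoothed function -/
noncomputable def fv (A : E →L[ℝ] H) (φ : E → ℝ) (uc : E) (γ : ℝ) (x : H) (u : E) : ℝ :=
  ⟪x, A u⟫ - φ u - γ * ((1/2) * ‖u - uc‖^2)

theorem fv_growth (A : E →L[ℝ] H) (φ : E → ℝ) (uc : E) (D : Set E) (hφ : ConvexOn ℝ D φ)
    (γ : ℝ) (x : H) (u : E) (hu : u ∈ D)
    (hmax : ∀ v ∈ D, fv A φ uc γ x v ≤ fv A φ uc γ x u) (v : E) (hv : v ∈ D) :
    fv A φ uc γ x v + γ / 2 * ‖v - u‖^2 ≤ fv A φ uc γ x u := by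
  have hc : ConvexOn ℝ D (fun v => φ v - ⟪x, A v⟫) := by
    refine ⟨hφ.1, ?_⟩
    intro a ha b hb s t hs ht hst
    have := hφ.2 ha hb hs ht hst
    simp only [smul_eq_mul, map_add, map_smul, inner_add_right, real_inner_smul_right] at *
    linarith
  have := growth D _ hc (γ/2) uc u hu (by
    intro y hy
    have := hmax y hy
    unfold fv at this
    linarith) v hv
  unfold fv
  linarith

theorem step (A : E →L[ℝ] H) (φ : E → ℝ) (uc : E) (D : Set E) (hφ : ConvexOn ℝ D φ)
    (G : Set H) (g : H → ℝ) (hg : ConvexOn ℝ G g) (γ β : ℝ) (hβ : 0 < β)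
    (hβγ : β * ‖A‖^2 = γ)
    (us : H → E) (hus : ∀ x, us x ∈ D)
    (hmax : ∀ x, ∀ v ∈ D, fv A φ uc γ x v ≤ fv A φ uc γ x (us x))
    (k : ℝ) (hk : 0 ≤ k) (x xt xh xp xtp y : H) (hx : x ∈ G) (hy : y ∈ G) (hxp : xp ∈ G)
    (hxh : (k + 1) • xh = k • x + xt)
    (hxtp : xtp = xt - (k + 1) • (xh - xp))
    (hprox : ∀ z ∈ G, g xp + (2*β)⁻¹ * ‖xp - (xh - β • A (us xh))‖^2
      ≤ g z + (2*β)⁻¹ * ‖z - (xh - β • A (us xh))‖^2) :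
    (k + 1) * (fv A φ uc γ xp (us xp) + g xp)
      ≤ k * (fv A φ uc γ x (us x) + g x) - k * (γ / 2 * ‖us xh - us x‖^2)
        + (fv A φ uc γ y (us xh) + g y)
        + (2 * (β * (k+1)))⁻¹ * (‖xt - y‖^2 - ‖xtp - y‖^2) := by
  set u := us xh with hu
  -- descent
  have hdesc : fv A φ uc γ xp (us xp)
      ≤ fv A φ uc γ xp u + (2*β)⁻¹ * ‖xp - xh‖^2 := by
    have h1 := fv_growth A φ uc D hφ γ xh u (hus _) (hmax _) (us xp) (hus _)
    have h2 : ⟪xp - xh, A (us xp - u)⟫ ≤ ‖xp - xh‖ * (‖A‖ * ‖us xp - u‖) :=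
      (real_inner_le_norm _ _).trans
        (mul_le_mul_of_nonneg_left (A.le_opNorm _) (norm_nonneg _))
    have h3 : ‖xp - xh‖ * (‖A‖ * ‖us xp - u‖)
        ≤ (2*β)⁻¹ * ‖xp - xh‖^2 + γ / 2 * ‖us xp - u‖^2 := by
      rw [← hβγ]
      have : (2*β)⁻¹ * ‖xp - xh‖^2 + (β * ‖A‖^2) / 2 * ‖us xp - u‖^2
          - ‖xp - xh‖ * (‖A‖ * ‖us xp - u‖)
          = (2*β)⁻¹ * (‖xp - xh‖ - β * ‖A‖ * ‖us xp - u‖)^2 := by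
        field_simp
        ring
      have h4 : 0 ≤ (2*β)⁻¹ * (‖xp - xh‖ - β * ‖A‖ * ‖us xp - u‖)^2 := by positivity
      linarith
    unfold fv at *
    simp only [map_sub, inner_sub_left, inner_sub_right] at *
    linarith
  have hz : ∀ z ∈ G, fv A φ uc γ xp (us xp) + g xp
      ≤ fv A φ uc γ z u + g z + (2*β)⁻¹ * (‖z - xh‖^2 - ‖z - xp‖^2) := by
    intro z hz
    have h1 := growth G g hg (2*β)⁻¹ (xh - β • A u) xp hxp hprox z hz
    have e : ∀ w : H, (2*β)⁻¹ * ‖w - (xh - β • A u)‖^2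
        = (2*β)⁻¹ * ‖w - xh‖^2 + ⟪w - xh, A u⟫ + (2*β)⁻¹ * ‖β • A u‖^2 := by
      intro w
      rw [show w - (xh - β • A u) = (w - xh) + β • A u by abel, norm_add_sq_real,
        real_inner_smul_right]
      field_simp
    rw [e, e] at h1
    unfold fv at *
    simp only [inner_sub_left] at *
    linarith
  have hzx := hz x hx
  have hzy := hz y hy
  have hgx := fv_growth A φ uc D hφ γ x (us x) (hus _) (hmax _) u (hus _)
  have hid : (2*β)⁻¹ * (k * (‖x - xh‖^2 - ‖x - xp‖^2) + (‖y - xh‖^2 - ‖y - xp‖^2))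
      = (2 * (β * (k+1)))⁻¹ * (‖xt - y‖^2 - ‖xtp - y‖^2) := by
    have hxt : xt = (k+1) • xh - k • x := by rw [hxh]; abel
    rw [hxtp, hxt]
    have : (‖(k+1) • xh - k • x - y‖^2 - ‖(k+1) • xh - k • x - (k + 1) • (xh - xp) - y‖^2)
        = (k+1) * (k * (‖x - xh‖^2 - ‖x - xp‖^2) + (‖y - xh‖^2 - ‖y - xp‖^2)) := by
      simp only [← real_inner_self_eq_norm_sq, inner_sub_left,
        inner_sub_right, real_inner_smul_left, real_inner_smul_right, real_inner_comm xh x,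
        real_inner_comm xp x, real_inner_comm y x, real_inner_comm xp xh, real_inner_comm y xh,
        real_inner_comm y xp]
      ring
    rw [this]
    field_simp
  rw [← hid]
  have := mul_le_mul_of_nonneg_left hzx hk
  have := mul_le_mul_of_nonneg_left hgx hk
  linarith

theorem quad_bound (k : ℝ) (hk : 0 ≤ k) (a c : E) :
    ‖a‖^2 - ‖c‖^2 - k * ‖c - a‖^2 ≤ ‖a‖^2 / (k+1) := by
  have h : ‖a‖^2 / (k+1) - (‖a‖^2 - ‖c‖^2 - k * ‖c - a‖^2)
      = (k+1) * ‖c - (k/(k+1)) • a‖^2 := by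
    simp only [← real_inner_self_eq_norm_sq, inner_sub_left,
        inner_sub_right, real_inner_smul_left, real_inner_smul_right, real_inner_comm c a]
    field_simp
    ring
  have : 0 ≤ (k+1) * ‖c - (k/(k+1)) • a‖^2 := by positivity
  linarith

theorem iter (A : E →L[ℝ] H) (hA : 0 < ‖A‖) (φ : E → ℝ) (uc : E) (D : Set E)
    (hφ : ConvexOn ℝ D φ) (DU : ℝ) (hDU : ∀ v ∈ D, (1/2) * ‖v - uc‖^2 ≤ DU)
    (G : Set H) (g : H → ℝ) (hg : ConvexOn ℝ G g)
    (us : ℝ → H → E) (hus : ∀ γ > (0:ℝ), ∀ x, us γ x ∈ D)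
    (hmax : ∀ γ > (0:ℝ), ∀ x, ∀ v ∈ D, fv A φ uc γ x v ≤ fv A φ uc γ x (us γ x))
    (γ1 : ℝ) (hγ1 : 0 < γ1) (γs : ℕ → ℝ) (hγs : ∀ k : ℕ, γs (k+1) = γ1 / ((k:ℝ) + 1))
    (x xt xh : ℕ → H) (hxG : ∀ k, x k ∈ G)
    (hxh : ∀ k : ℕ, ((k:ℝ) + 1) • xh k = (k:ℝ) • x k + xt k)
    (hxt : ∀ k : ℕ, xt (k+1) = xt k - ((k:ℝ) + 1) • (xh k - x (k+1)))
    (hprox : ∀ k : ℕ, ∀ z ∈ G, g (x (k+1)) + (2*(γs (k+1)/‖A‖^2))⁻¹ *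
        ‖x (k+1) - (xh k - (γs (k+1)/‖A‖^2) • A (us (γs (k+1)) (xh k)))‖^2
      ≤ g z + (2*(γs (k+1)/‖A‖^2))⁻¹ *
        ‖z - (xh k - (γs (k+1)/‖A‖^2) • A (us (γs (k+1)) (xh k)))‖^2)
    (y : H) (hy : y ∈ G) (k : ℕ) :
    ((k:ℝ) + 1) * (fv A φ uc (γs (k+1)) (x (k+1)) (us (γs (k+1)) (x (k+1))) + g (x (k+1)))
      ≤ ∑ i ∈ Finset.range (k+1),
          (⟪y, A (us (γs (i+1)) (xh i))⟫ - φ (us (γs (i+1)) (xh i)) + g y)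
        + γ1 * DU * (1 - 1/((k:ℝ)+1))
        + ‖A‖^2 / (2*γ1) * (‖xt 0 - y‖^2 - ‖xt (k+1) - y‖^2) := by
  have hpos : ∀ k : ℕ, 0 < γs (k+1) := fun k => by rw [hγs]; positivity
  have hst : ∀ k : ℕ, _ := fun k : ℕ => step A φ uc D hφ G g hg (γs (k+1)) (γs (k+1)/‖A‖^2)
    (by have := hpos k; positivity) (by field_simp) (us (γs (k+1))) (hus _ (hpos k))
    (hmax _ (hpos k)) (k:ℝ) (by positivity) (x k) (xt k) (xh k) (x (k+1)) (xt (k+1)) y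
    (hxG _) hy (hxG _) (hxh k) (hxt k) (hprox k)
  have hc : ∀ k : ℕ, (2 * (γs (k+1)/‖A‖^2 * ((k:ℝ)+1)))⁻¹ = ‖A‖^2 / (2*γ1) := by
    intro k
    rw [hγs]; field_simp
  have hDU0 : 0 ≤ DU := le_trans (by positivity) (hDU _ (hus 1 one_pos (x 0)))
  induction k with
  | zero =>
    have h := hst 0
    rw [hc] at h
    have hb : 0 ≤ γs (0+1) * ((1/2) * ‖us (γs (0+1)) (xh 0) - uc‖^2) := by
      have := hpos 0
      positivity
    unfold fv at *
    simp at *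
    linarith
  | succ k ih =>
    have h := hst (k+1)
    rw [hc] at h
    rw [Finset.sum_range_succ]
    set v := us (γs (k+1+1)) (x (k+1)) with hv
    set u := us (γs (k+1+1)) (xh (k+1)) with hu
    have hm := hmax _ (hpos k) (x (k+1)) v (hus _ (hpos (k+1)) _)
    have hq := quad_bound ((k:ℝ)+1) (by positivity) (v - uc) (u - uc)
    rw [show u - uc - (v - uc) = u - v by abel] at hq
    have hb := hDU v (hus _ (hpos (k+1)) _)
    -- relation of smoothing parameters
    have hcmp : ((k:ℝ)+1) * fv A φ uc (γs (k+1+1)) (x (k+1)) v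
        ≤ ((k:ℝ)+1) * fv A φ uc (γs (k+1)) (x (k+1)) (us (γs (k+1)) (x (k+1)))
          + γs (k+1+1) * ((1/2) * ‖v - uc‖^2) := by
      have h1 := mul_le_mul_of_nonneg_left hm (show (0:ℝ) ≤ (k:ℝ)+1 by positivity)
      have h2 : ((k:ℝ)+1) * γs (k+1) = ((k:ℝ)+1) * γs (k+1+1) + γs (k+1+1) := by
        rw [hγs, hγs]; push_cast; field_simp
      have h3 : ((k:ℝ)+1) * fv A φ uc (γs (k+1+1)) (x (k+1)) v
          = ((k:ℝ)+1) * fv A φ uc (γs (k+1)) (x (k+1)) v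
          + γs (k+1+1) * ((1/2) * ‖v - uc‖^2) := by
        unfold fv
        linear_combination ((1/2) * ‖v - uc‖^2) * h2
      linarith
    have hfy : fv A φ uc (γs (k+1+1)) y u
      = ⟪y, A u⟫ - φ u - γs (k+1+1) * ((1/2) * ‖u - uc‖^2) := rfl
    have hg2 : γs (k+1+1) = γ1 / ((k:ℝ)+1+1) := by rw [hγs]; push_cast; rfl
    have herr : γs (k+1+1) * ((1/2) * ‖v - uc‖^2) - γs (k+1+1) * ((1/2) * ‖u - uc‖^2)
        - ((k:ℝ)+1) * (γs (k+1+1) / 2 * ‖u - v‖^2)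
        ≤ γ1 * DU * ((1 - 1/((k:ℝ)+1+1)) - (1 - 1/((k:ℝ)+1))) := by
      have h1 : γs (k+1+1) / 2 * (‖v - uc‖^2 - ‖u - uc‖^2 - ((k:ℝ)+1) * ‖u - v‖^2)
          ≤ γs (k+1+1) / 2 * (‖v - uc‖^2 / ((k:ℝ)+1+1)) :=
        mul_le_mul_of_nonneg_left hq (by have := hpos (k+1); positivity)
      have h2 : γs (k+1+1) / 2 * (‖v - uc‖^2 / ((k:ℝ)+1+1))
          = γ1 / ((k:ℝ)+1+1)^2 * ((1/2) * ‖v - uc‖^2) := by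
        rw [hg2]; field_simp
      have h3 : γ1 / ((k:ℝ)+1+1)^2 * ((1/2) * ‖v - uc‖^2) ≤ γ1 / ((k:ℝ)+1+1)^2 * DU :=
        mul_le_mul_of_nonneg_left hb (by positivity)
      have h4 : γ1 / ((k:ℝ)+1+1)^2 * DU
          ≤ γ1 * DU * ((1 - 1/((k:ℝ)+1+1)) - (1 - 1/((k:ℝ)+1))) := by
        have h5 : ((1 - 1/((k:ℝ)+1+1)) - (1 - 1/((k:ℝ)+1))) = 1 / (((k:ℝ)+1)*((k:ℝ)+1+1)) := by
          field_simp; ring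
        rw [h5]
        have h6 : 1 / ((k:ℝ)+1+1)^2 ≤ 1 / (((k:ℝ)+1)*((k:ℝ)+1+1)) := by
          apply one_div_le_one_div_of_le (by positivity)
          nlinarith [(Nat.cast_nonneg k : (0:ℝ) ≤ k)]
        have := mul_le_mul_of_nonneg_left h6 (mul_nonneg hγ1.le hDU0)
        calc _ = γ1 * DU * (1 / ((k:ℝ)+1+1)^2) := by ring
          _ ≤ _ := this
      linarith
    push_cast at *
    linarith

theorem core [CompleteSpace H] (A : E →L[ℝ] H) (hA : 0 < ‖A‖) (φ : E → ℝ) (uc : E) (D : Set E)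
    (hφ : ConvexOn ℝ D φ) (DU : ℝ) (hDU : ∀ v ∈ D, (1/2) * ‖v - uc‖^2 ≤ DU)
    (K : Set H) (hKne : K.Nonempty) (hKcl : IsClosed K) (hKcx : Convex ℝ K) (b : H)
    (G : Set H) (g : H → ℝ)
    (hg1 : ∀ x ∈ G, ∀ r ∈ K, ⟪x, r⟫ - ⟪b, x⟫ ≤ g x)
    (hg2 : ∀ x, ∀ M : ℝ, (∀ r ∈ K, ⟪x, r⟫ - ⟪b, x⟫ ≤ M) → x ∈ G ∧ g x ≤ M)
    (us : ℝ → H → E) (hus : ∀ γ > (0:ℝ), ∀ x, us γ x ∈ D)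
    (hmax : ∀ γ > (0:ℝ), ∀ x, ∀ v ∈ D, fv A φ uc γ x v ≤ fv A φ uc γ x (us γ x))
    (γ1 : ℝ) (hγ1 : 0 < γ1) (γs : ℕ → ℝ) (hγs : ∀ k : ℕ, γs (k+1) = γ1 / ((k:ℝ) + 1))
    (x xt xh : ℕ → H) (hxG : ∀ k, x k ∈ G) (hxt0 : xt 0 = x 0)
    (hxh : ∀ k : ℕ, ((k:ℝ) + 1) • xh k = (k:ℝ) • x k + xt k)
    (hxt : ∀ k : ℕ, xt (k+1) = xt k - ((k:ℝ) + 1) • (xh k - x (k+1)))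
    (hprox : ∀ k : ℕ, ∀ z ∈ G, g (x (k+1)) + (2*(γs (k+1)/‖A‖^2))⁻¹ *
        ‖x (k+1) - (xh k - (γs (k+1)/‖A‖^2) • A (us (γs (k+1)) (xh k)))‖^2
      ≤ g z + (2*(γs (k+1)/‖A‖^2))⁻¹ *
        ‖z - (xh k - (γs (k+1)/‖A‖^2) • A (us (γs (k+1)) (xh k)))‖^2)
    (upr : E) (hupr : upr ∈ D) (hfeas : b - A upr ∈ K)
    (xs : H) (hxs : xs ∈ G)
    (hsaddle : ∀ v ∈ D, ∀ r ∈ K, φ upr + ⟪xs, A v - b + r⟫ ≤ φ v)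
    (k : ℕ) (ubar : E)
    (hubar : ((k:ℝ)+1) • ubar = ∑ i ∈ Finset.range (k+1), us (γs (i+1)) (xh i)) :
    Metric.infDist (b - A ubar) K
        ≤ ‖A‖^2 * (‖x 0 - xs‖
            + Real.sqrt (‖x 0 - xs‖^2 + 2*(‖A‖^2)⁻¹*(2*γ1^2 + γ1)*DU))
          / (γ1 * ((k:ℝ) + 1)) := by
  have hg : ConvexOn ℝ G g := by
    have key : ∀ x ∈ G, ∀ y ∈ G, ∀ s t : ℝ, 0 ≤ s → 0 ≤ t → s + t = 1 →
        s • x + t • y ∈ G ∧ g (s • x + t • y) ≤ s * g x + t * g y := by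
      intro x hx y hy s t hs ht hst
      apply hg2
      intro r hr
      have h1 := mul_le_mul_of_nonneg_left (hg1 x hx r hr) hs
      have h2 := mul_le_mul_of_nonneg_left (hg1 y hy r hr) ht
      simp only [inner_add_left, inner_add_right, real_inner_smul_left, real_inner_smul_right]
      linarith
    exact ⟨fun x hx y hy s t hs ht hst => (key x hx y hy s t hs ht hst).1,
      fun x hx y hy s t hs ht hst => (key x hx y hy s t hs ht hst).2⟩
  have hDU0 : 0 ≤ DU := le_trans (by positivity) (hDU _ hupr)
  have hS : (0:ℝ) < (k:ℝ)+1 := by positivity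
  have hγp : 0 < γs (k+1) := by rw [hγs]; positivity
  obtain ⟨r0, hr0, hr0min⟩ := exists_norm_eq_iInf_of_complete_convex hKne hKcl.isComplete hKcx
    (b - A ubar)
  have hproj := (norm_eq_iInf_iff_real_inner_le_zero hKcx hr0).1 hr0min
  have hdist : Metric.infDist (b - A ubar) K ≤ ‖b - A ubar - r0‖ := by
    rw [← dist_eq_norm]; exact Metric.infDist_le_dist_of_mem hr0
  refine hdist.trans ?_
  set w := b - A ubar - r0 with hw
  -- main inequality
  have hmain : ∀ t : ℝ, 0 ≤ t → ((k:ℝ)+1) * (t * ‖w‖^2)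
      ≤ 2 * γ1 * DU + ‖A‖^2 / (2*γ1) * ‖x 0 - xs - t • w‖^2 := by
    intro t ht
    obtain ⟨hyG, hgy⟩ := hg2 (xs + t • w) (g xs + t * (⟪w, r0⟫ - ⟪b, w⟫)) (by
      intro r hr
      have h1 := hg1 xs hxs r hr
      have h2 := mul_le_mul_of_nonneg_left (hproj r hr) ht
      simp only [inner_add_left, inner_add_right, real_inner_smul_left, real_inner_smul_right,
        inner_sub_right (𝕜 := ℝ) w r r0] at *
      linarith)
    have hi := iter A hA φ uc D hφ DU hDU G g hg us hus hmax γ1 hγ1 γs hγs x xt xh hxG hxh hxt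
      hprox _ hyG k
    have hlow : -φ upr - γs (k+1) * DU
        ≤ fv A φ uc (γs (k+1)) (x (k+1)) (us (γs (k+1)) (x (k+1))) + g (x (k+1)) := by
      have h1 := hmax _ hγp (x (k+1)) upr hupr
      have h2 := hg1 _ (hxG (k+1)) _ hfeas
      have h3 := mul_le_mul_of_nonneg_left (hDU _ hupr) hγp.le
      rw [inner_sub_right, real_inner_comm] at h2
      have h4 : fv A φ uc (γs (k+1)) (x (k+1)) upr
        = ⟪x (k+1), A upr⟫ - φ upr - γs (k+1) * ((1/2) * ‖upr - uc‖^2) := rfl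
      linarith
    have hlow2 := mul_le_mul_of_nonneg_left hlow hS.le
    have hγS : ((k:ℝ)+1) * γs (k+1) = γ1 := by rw [hγs]; field_simp
    have hsad : ∀ v ∈ D, φ upr + ⟪xs, A v⟫ + g xs ≤ φ v := by
      intro v hv
      have := (hg2 xs (φ v - φ upr - ⟪xs, A v⟫) (by
        intro r hr
        have := hsaddle v hv r hr
        rw [inner_add_right, inner_sub_right] at this
        linarith [real_inner_comm b xs])).2
      linarith
    have hsum : ∑ i ∈ Finset.range (k+1),
          (⟪xs + t • w, A (us (γs (i+1)) (xh i))⟫ - φ (us (γs (i+1)) (xh i)) + g (xs + t • w))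
        ≤ ∑ i ∈ Finset.range (k+1),
          (⟪t • w, A (us (γs (i+1)) (xh i))⟫ + (g (xs + t • w) - g xs - φ upr)) := by
      apply Finset.sum_le_sum
      intro i _
      have hγi : 0 < γs (i+1) := by rw [hγs]; positivity
      have := hsad _ (hus _ hγi (xh i))
      rw [inner_add_left]
      linarith
    have hsum2 : ∑ i ∈ Finset.range (k+1),
          (⟪t • w, A (us (γs (i+1)) (xh i))⟫ + (g (xs + t • w) - g xs - φ upr))
        = ((k:ℝ)+1) * (t * ⟪w, A ubar⟫ + (g (xs + t • w) - g xs - φ upr)) := by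
      rw [Finset.sum_add_distrib, ← inner_sum, ← map_sum, ← hubar, map_smul]
      simp only [real_inner_smul_left, real_inner_smul_right, Finset.sum_const, Finset.card_range,
        nsmul_eq_mul]
      push_cast
      ring
    have hgy2 := mul_le_mul_of_nonneg_left hgy hS.le
    have hww : ‖w‖^2 = ⟪b, w⟫ - ⟪w, A ubar⟫ - ⟪w, r0⟫ := by
      rw [← real_inner_self_eq_norm_sq]
      conv_lhs => rw [hw]
      rw [← hw, inner_sub_left, inner_sub_left, real_inner_comm w (A ubar), real_inner_comm w r0]
    have hnn : 0 ≤ ‖A‖^2 / (2*γ1) * ‖xt (k+1) - (xs + t • w)‖^2 := by positivity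
    have hD2 : γ1 * DU * (1 - 1/((k:ℝ)+1)) ≤ γ1 * DU := by
      have : 0 ≤ γ1 * DU * (1/((k:ℝ)+1)) := by positivity
      linarith
    rw [hxt0, show x 0 - (xs + t • w) = x 0 - xs - t • w by abel] at hi
    rw [hww]
    have hγS2 : ((k:ℝ)+1) * (γs (k+1) * DU) = γ1 * DU := by rw [← mul_assoc, hγS]
    linarith
  -- conclusion
  set d := ‖x 0 - xs‖ with hd
  set q := γ1 * ((k:ℝ)+1) / ‖A‖^2 * ‖w‖ with hq
  have hqle : q ≤ d + Real.sqrt (d^2 + 2*(‖A‖^2)⁻¹*(2*γ1^2 + γ1)*DU) := by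
    by_cases hqd : q ≤ d
    · linarith [Real.sqrt_nonneg (d^2 + 2*(‖A‖^2)⁻¹*(2*γ1^2 + γ1)*DU)]
    push Not at hqd
    have hw0 : 0 < ‖w‖ := by
      rcases (norm_nonneg w).eq_or_lt with h | h
      · rw [← h, mul_zero] at hq
        have : 0 ≤ d := norm_nonneg _
        linarith
      · exact h
    have h1 := hmain ((q - d) / ‖w‖) (by apply div_nonneg _ hw0.le; linarith)
    have h2 : ‖x 0 - xs - ((q - d) / ‖w‖) • w‖ ≤ q := by
      refine (norm_sub_le _ _).trans ?_
      rw [norm_smul, Real.norm_of_nonneg (by apply div_nonneg _ hw0.le; linarith),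
        div_mul_cancel₀ _ hw0.ne']
      linarith
    have h3 : ‖x 0 - xs - ((q - d) / ‖w‖) • w‖^2 ≤ q^2 := by gcongr
    have h4 := mul_le_mul_of_nonneg_left h3 (show 0 ≤ ‖A‖^2 / (2*γ1) by positivity)
    have h5 : ((k:ℝ)+1) * ((q - d) / ‖w‖ * ‖w‖^2) = ‖A‖^2 / γ1 * (q * (q - d)) := by
      rw [hq]; field_simp
    have h6 : ‖A‖^2 / γ1 * (q * (q - d)) ≤ 2 * γ1 * DU + ‖A‖^2 / (2*γ1) * q^2 := by linarith
    have h7 : (q - d)^2 ≤ d^2 + 2*(‖A‖^2)⁻¹*(2*γ1^2)*DU := by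
      have h8 := mul_le_mul_of_nonneg_left h6 (show 0 ≤ 2 * γ1 / ‖A‖^2 by positivity)
      have e1 : 2 * γ1 / ‖A‖^2 * (‖A‖^2 / γ1 * (q * (q - d))) = 2 * (q * (q-d)) := by
        field_simp
      have e2 : 2 * γ1 / ‖A‖^2 * (2 * γ1 * DU + ‖A‖^2 / (2*γ1) * q^2)
          = 2*(‖A‖^2)⁻¹*(2*γ1^2)*DU + q^2 := by
        field_simp
      rw [e1, e2] at h8
      linarith
    have h9 : (q - d)^2 ≤ d^2 + 2*(‖A‖^2)⁻¹*(2*γ1^2 + γ1)*DU := by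
      have : 0 ≤ 2*(‖A‖^2)⁻¹*γ1*DU := by positivity
      linarith
    have := Real.le_sqrt_of_sq_le h9
    linarith
  rw [le_div_iff₀ (by positivity)]
  have : ‖w‖ * (γ1 * ((k:ℝ)+1)) = ‖A‖^2 * q := by rw [hq]; field_simp
  rw [this]
  gcongr

end Stmt19Aux

theorem stmt_19
    {n p : ℕ} (hn : 1 ≤ n) (hp : 1 ≤ p)
    (U : Set (EuclideanSpace ℝ (Fin n)))
    (hUne : U.Nonempty) (hUcl : IsClosed U) (hUcx : Convex ℝ U)
    (φ : EuclideanSpace ℝ (Fin n) → EReal)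
    (hφbot : ∀ v, φ v ≠ ⊥)
    (hφlsc : LowerSemicontinuous φ)
    (hφcx : ∀ v w : EuclideanSpace ℝ (Fin n), ∀ a c : ℝ, 0 ≤ a → 0 ≤ c → a + c = 1 →
      φ (a • v + c • w) ≤ (a : EReal) * φ v + (c : EReal) * φ w)
    (hφdom : ∃ v ∈ U, φ v ≠ ⊤)
    (A : EuclideanSpace ℝ (Fin n) →L[ℝ] EuclideanSpace ℝ (Fin p))
    (hAnorm : 0 < ‖A‖)
    (bvec : EuclideanSpace ℝ (Fin p))
    (K : Set (EuclideanSpace ℝ (Fin p)))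
    (hKne : K.Nonempty) (hKcl : IsClosed K) (hKcx : Convex ℝ K)
    (φstar : ℝ) (upr : EuclideanSpace ℝ (Fin n))
    (huprU : upr ∈ U) (huprfeas : A upr - bvec ∈ -K) (huprval : φ upr = (φstar : EReal))
    (hprmin : ∀ v ∈ U, A v - bvec ∈ -K → (φstar : EReal) ≤ φ v)
    (uc : EuclideanSpace ℝ (Fin n)) (hucU : uc ∈ U)
    (DU : ℝ)
    (hDUbdd : BddAbove ((fun v => (1/2) * ‖v - uc‖^2) '' {v | v ∈ U ∧ φ v ≠ ⊤}))
    (hDU : DU = sSup ((fun v => (1/2) * ‖v - uc‖^2) '' {v | v ∈ U ∧ φ v ≠ ⊤}))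
    (ustar : ℝ → EuclideanSpace ℝ (Fin p) → EuclideanSpace ℝ (Fin n))
    (humem : ∀ γ > (0:ℝ), ∀ x, ustar γ x ∈ U)
    (hufin : ∀ γ > (0:ℝ), ∀ x, φ (ustar γ x) ≠ ⊤)
    (humax : ∀ γ > (0:ℝ), ∀ x, ∀ v ∈ U,
      (⟪x, A v⟫ : EReal) - φ v - ((γ * ((1/2) * ‖v - uc‖^2) : ℝ) : EReal)
        ≤ (⟪x, A (ustar γ x)⟫ : EReal) - φ (ustar γ x)
          - ((γ * ((1/2) * ‖ustar γ x - uc‖^2) : ℝ) : EReal))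
    (g : EuclideanSpace ℝ (Fin p) → EReal)
    (hg : ∀ x, g x = (⨆ r ∈ K, (⟪x, r⟫ : EReal)) - ((⟪bvec, x⟫ : ℝ) : EReal))
    (F : EuclideanSpace ℝ (Fin p) → EReal)
    (hF : ∀ x, F x = (⨆ v ∈ U, ((⟪x, A v⟫ : EReal) - φ v)) + g x)
    (prox : ℝ → EuclideanSpace ℝ (Fin p) → EuclideanSpace ℝ (Fin p))
    (hprox : ∀ β > (0:ℝ), ∀ x y,
      g (prox β x) + (((2*β)⁻¹ * ‖prox β x - x‖^2 : ℝ) : EReal)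
        ≤ g y + (((2*β)⁻¹ * ‖y - x‖^2 : ℝ) : EReal))
    (hproxu : ∀ β > (0:ℝ), ∀ x y,
      (∀ w, g y + (((2*β)⁻¹ * ‖y - x‖^2 : ℝ) : EReal)
          ≤ g w + (((2*β)⁻¹ * ‖w - x‖^2 : ℝ) : EReal)) → y = prox β x)
    (γ1 : ℝ) (hγ1 : 0 < γ1)
    (τ : ℕ → ℝ) (hτ : ∀ k : ℕ, τ k = 1/((k:ℝ) + 1))
    (γs : ℕ → ℝ) (hγs : ∀ k : ℕ, γs (k+1) = γ1 / ((k:ℝ) + 1))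
    (x xt xh : ℕ → EuclideanSpace ℝ (Fin p))
    (hxt0 : xt 0 = x 0) (hx0dom : F (x 0) ≠ ⊤)
    (hxh : ∀ k : ℕ, xh k = (1 - τ k) • x k + τ k • xt k)
    (hxrec : ∀ k : ℕ, x (k+1)
        = prox (γs (k+1)/‖A‖^2) (xh k - (γs (k+1)/‖A‖^2) • A (ustar (γs (k+1)) (xh k))))
    (hxtrec : ∀ k : ℕ, xt (k+1) = xt k - (τ k)⁻¹ • (xh k - x (k+1)))
    (ubar : ℕ → EuclideanSpace ℝ (Fin n))
    (hubar : ∀ k : ℕ, ubar k = (γ1 * ((k:ℝ) + 1))⁻¹ •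
        ∑ i ∈ Finset.range (k+1), (γs (i+1) / τ i) • ustar (γs (i+1)) (xh i))
    (xs : EuclideanSpace ℝ (Fin p))
    (hxsmin : ∀ y, F xs ≤ F y) (hFs : F xs = ((-φstar : ℝ) : EReal))
    (hsaddle : ∀ v ∈ U, ∀ r ∈ K,
      ((φstar + ⟪xs, A v - bvec + r⟫ : ℝ) : EReal) ≤ φ v)
    :
    ∀ k : ℕ,
      Metric.infDist (bvec - A (ubar k)) K
        ≤ ‖A‖^2 * (‖x 0 - xs‖
            + Real.sqrt (‖x 0 - xs‖^2 + 2*(‖A‖^2)⁻¹*(2*γ1^2 + γ1)*DU))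
          / (γ1 * ((k:ℝ) + 1)) := by
  set D : Set (EuclideanSpace ℝ (Fin n)) := {v | v ∈ U ∧ φ v ≠ ⊤} with hD
  set G : Set (EuclideanSpace ℝ (Fin p)) := {y | g y ≠ ⊤} with hG
  have hφe : ∀ v ∈ D, φ v = (((φ v).toReal : ℝ) : EReal) := fun v hv =>
    (EReal.coe_toReal hv.2 (hφbot v)).symm
  obtain ⟨rK, hrK⟩ := hKne
  have hgle : ∀ y, ∀ r ∈ K, ((⟪y, r⟫ - ⟪bvec, y⟫ : ℝ) : EReal) ≤ g y := by
    intro y r hr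
    rw [hg, EReal.coe_sub]
    exact EReal.sub_le_sub (le_iSup₂_of_le r hr le_rfl) le_rfl
  have hgbot : ∀ y, g y ≠ ⊥ := by
    intro y h
    have := hgle y rK hrK
    rw [h, le_bot_iff] at this
    exact EReal.coe_ne_bot _ this
  have hge : ∀ y ∈ G, g y = (((g y).toReal : ℝ) : EReal) := fun y hy =>
    (EReal.coe_toReal hy (hgbot y)).symm
  have hg1 : ∀ y ∈ G, ∀ r ∈ K, ⟪y, r⟫ - ⟪bvec, y⟫ ≤ (g y).toReal := by
    intro y hy r hr
    have := hgle y r hr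
    rw [hge y hy] at this
    exact_mod_cast this
  have hg2 : ∀ y, ∀ M : ℝ, (∀ r ∈ K, ⟪y, r⟫ - ⟪bvec, y⟫ ≤ M) → y ∈ G ∧ (g y).toReal ≤ M := by
    intro y M hM
    have h1 : g y ≤ (M : EReal) := by
      rw [hg]
      have h2 : (⨆ r ∈ K, ((⟪y, r⟫ : ℝ) : EReal)) ≤ ((M + ⟪bvec, y⟫ : ℝ) : EReal) := by
        apply iSup₂_le
        intro r hr
        have := hM r hr
        exact_mod_cast (by linarith : ⟪y, r⟫ ≤ M + ⟪bvec, y⟫)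
      refine (EReal.sub_le_sub h2 le_rfl).trans ?_
      rw [← EReal.coe_sub]
      simp
    have hyG : y ∈ G := fun h => by
      rw [h, top_le_iff] at h1
      exact EReal.coe_ne_top _ h1
    refine ⟨hyG, ?_⟩
    rw [hge y hyG] at h1
    exact_mod_cast h1
  have hFG : ∀ y, F y ≠ ⊤ → y ∈ G := by
    intro y hy h
    apply hy
    rw [hF, h]
    apply EReal.add_top_of_ne_bot
    obtain ⟨v, hv, hv2⟩ := hφdom
    intro hb
    have h1 : ((⟪y, A v⟫ : ℝ) : EReal) - φ v
        ≤ ⨆ v ∈ U, (((⟪y, A v⟫ : ℝ) : EReal) - φ v) := le_iSup₂_of_le v hv le_rfl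
    rw [hb, hφe v ⟨hv, hv2⟩, ← EReal.coe_sub, le_bot_iff] at h1
    exact EReal.coe_ne_bot _ h1
  have hxsG : xs ∈ G := hFG xs (by rw [hFs]; exact EReal.coe_ne_top _)
  have hφc : ConvexOn ℝ D (fun v => (φ v).toReal) := by
    have key : ∀ v ∈ D, ∀ w ∈ D, ∀ s t : ℝ, 0 ≤ s → 0 ≤ t → s + t = 1 →
        s • v + t • w ∈ D ∧
          (φ (s • v + t • w)).toReal ≤ s * (φ v).toReal + t * (φ w).toReal := by
      intro v hv w hw s t hs ht hst
      have h1 := hφcx v w s t hs ht hst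
      rw [hφe v hv, hφe w hw, ← EReal.coe_mul, ← EReal.coe_mul, ← EReal.coe_add] at h1
      have hm : s • v + t • w ∈ D := by
        refine ⟨hUcx hv.1 hw.1 hs ht hst, fun h => ?_⟩
        rw [h, top_le_iff] at h1
        exact EReal.coe_ne_top _ h1
      refine ⟨hm, ?_⟩
      rw [hφe _ hm] at h1
      exact_mod_cast h1
    exact ⟨fun v hv w hw s t hs ht hst => (key v hv w hw s t hs ht hst).1,
      fun v hv w hw s t hs ht hst => (key v hv w hw s t hs ht hst).2⟩
  have hus : ∀ γ > (0:ℝ), ∀ y, ustar γ y ∈ D := fun γ hγ y => ⟨humem γ hγ y, hufin γ hγ y⟩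
  have hmax : ∀ γ > (0:ℝ), ∀ y, ∀ v ∈ D,
      Stmt19Aux.fv A (fun v => (φ v).toReal) uc γ y v
        ≤ Stmt19Aux.fv A (fun v => (φ v).toReal) uc γ y (ustar γ y) := by
    intro γ hγ y v hv
    have h := humax γ hγ y v hv.1
    rw [hφe v hv, hφe _ (hus γ hγ y), ← EReal.coe_sub, ← EReal.coe_sub, ← EReal.coe_sub,
      ← EReal.coe_sub, EReal.coe_le_coe_iff] at h
    exact h
  have hupD : upr ∈ D := ⟨huprU, by rw [huprval]; exact EReal.coe_ne_top _⟩
  have hβ : ∀ k : ℕ, 0 < γs (k+1)/‖A‖^2 := fun k => by rw [hγs]; positivity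
  have hxG : ∀ k, x k ∈ G := by
    intro k
    cases k with
    | zero => exact hFG _ hx0dom
    | succ k =>
      intro h
      have h1 := hprox _ (hβ k) (xh k - (γs (k+1)/‖A‖^2) • A (ustar (γs (k+1)) (xh k))) xs
      rw [← hxrec k, h, hge xs hxsG, EReal.top_add_coe, ← EReal.coe_add, top_le_iff] at h1
      exact EReal.coe_ne_top _ h1
  intro k
  refine Stmt19Aux.core A hAnorm (fun v => (φ v).toReal) uc D hφc DU ?_ K ⟨rK, hrK⟩ hKcl hKcx
    bvec G (fun y => (g y).toReal) hg1 hg2 ustar hus hmax γ1 hγ1 γs hγs x xt xh hxG hxt0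
    ?_ ?_ ?_ upr hupD ?_ xs hxsG ?_ k (ubar k) ?_
  · intro v hv
    rw [hDU]
    exact le_csSup hDUbdd ⟨v, hv, rfl⟩
  · intro k
    rw [hxh, hτ, smul_add, smul_smul, smul_smul]
    have h1 : ((k:ℝ)+1) * (1 - 1/((k:ℝ)+1)) = k := by field_simp; ring
    have h2 : ((k:ℝ)+1) * (1/((k:ℝ)+1)) = 1 := by field_simp
    rw [h1, h2, one_smul]
  · intro k
    rw [hxtrec, hτ, one_div, inv_inv]
  · intro k z hz
    have h1 := hprox _ (hβ k) (xh k - (γs (k+1)/‖A‖^2) • A (ustar (γs (k+1)) (xh k))) z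
    rw [← hxrec k, hge _ (hxG (k+1)), hge z hz, ← EReal.coe_add, ← EReal.coe_add,
      EReal.coe_le_coe_iff] at h1
    exact h1
  · have := Set.mem_neg.1 huprfeas
    rwa [neg_sub] at this
  · intro v hv r hr
    have h1 := hsaddle v hv.1 r hr
    rw [hφe v hv, EReal.coe_le_coe_iff] at h1
    simp only [huprval, EReal.toReal_coe]
    exact h1
  · rw [hubar, smul_smul, Finset.smul_sum]
    apply Finset.sum_congr rfl
    intro i _
    rw [smul_smul, hγs, hτ]
    have : ((k:ℝ)+1) * (γ1 * ((k:ℝ)+1))⁻¹ * (γ1 / ((i:ℝ)+1) / (1/((i:ℝ)+1))) = 1 := by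
      field_simp
    rw [this, one_smul]
end
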